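/- Let s and e be composable labelled transition systems and let i_s, i_e be input-enabled transition systems with I_{i_s} = I_s, U_{i_s} = U_s, I_{i_e} = I_e and U_{i_e} = U_e. If s eco e, i_s uioco s and i_e uioco e, then i_s ∥ i_e uioco s ∥ e. -/

import Mathlib

/-- Labels extended with the quiescence label `δ`. -/
inductive ELabel (Lab : Type) : Type
  | lab : Lab → ELabel Lab
  | delta : ELabel Lab

namespace ELabel

/-- Membership of an extended label in `𝓛^δ = 𝓛 ∪ {δ}`. -/
def inL {Lab : Type} (Ls : Set Lab) : ELabel Lab → Prop
  | lab ℓ => ℓ ∈ Ls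
  | delta => True

end ELabel

/-- A trace lies in `(𝓛^δ)*`. -/
def TraceIn {Lab : Type} (Ls : Set Lab) (σ : List (ELabel Lab)) : Prop :=
  ∀ x ∈ σ, ELabel.inL Ls x

/-- A labelled transition system.  `T q none q'` is an internal `τ`-step,
`T q (some ℓ) q'` is a step labelled `ℓ`. -/
structure LTS (Q : Type) (Lab : Type) where
  I : Set Lab
  U : Set Lab
  T : Q → Option Lab → Q → Prop
  q0 : Q

namespace LTS

variable {Q Lab : Type}

/-- The label set `L = I ∪ U`. -/
def L (M : LTS Q Lab) : Set Lab := M.I ∪ M.U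

/-- Standing assumptions on all LTSs: countable, disjoint input/output label
sets, transitions labelled within `L`, strong convergence (no infinite
`τ`-sequences), and image-finiteness. -/
def WellFormed (M : LTS Q Lab) : Prop :=
  M.I.Countable ∧ M.U.Countable ∧ Disjoint M.I M.U ∧
  (∀ q ℓ q', M.T q (some ℓ) q' → ℓ ∈ M.L) ∧
  (¬ ∃ f : ℕ → Q, ∀ n, M.T (f n) none (f (n + 1))) ∧
  (∀ q a, {q' | M.T q a q'}.Finite)

/-- A state is quiescent if neither an output nor `τ` is enabled in it. -/
def Quiescent (M : LTS Q Lab) (q : Q) : Prop :=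
  (∀ x ∈ M.U, ∀ q', ¬ M.T q (some x) q') ∧ ∀ q', ¬ M.T q none q'

/-- A single visible step `q --x--> q'` for `x ∈ L^δ`, where the quiescence
label `δ` gives a self-loop at quiescent states. -/
def VStep (M : LTS Q Lab) (q : Q) : ELabel Lab → Q → Prop
  | .lab ℓ, q' => M.T q (some ℓ) q'
  | .delta, q' => q' = q ∧ M.Quiescent q

/-- Zero or more `τ`-steps: `q ==ε==> q'`. -/
def Eps (M : LTS Q Lab) : Q → Q → Prop :=
  Relation.ReflTransGen fun a b => M.T a none b

/-- Weak transition `q ==σ==> q'` for `σ ∈ (L^δ)*`. -/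
inductive W (M : LTS Q Lab) : Q → List (ELabel Lab) → Q → Prop
  | nil {q q' : Q} : M.Eps q q' → W M q [] q'
  | snoc {q q1 q2 q' : Q} {σ : List (ELabel Lab)} {x : ELabel Lab} :
      W M q σ q1 → M.VStep q1 x q2 → M.Eps q2 q' → W M q (σ ++ [x]) q'

/-- `X after σ`, for a set of states `X`. -/
def afterSet (M : LTS Q Lab) (X : Set Q) (σ : List (ELabel Lab)) : Set Q :=
  {q' | ∃ q ∈ X, M.W q σ q'}

/-- `M after σ`, from the initial state. -/
def after (M : LTS Q Lab) (σ : List (ELabel Lab)) : Set Q :=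
  {q' | M.W M.q0 σ q'}

/-- The predicate underlying `out(q) ⊆ U ∪ {δ}`. -/
def outLabel (M : LTS Q Lab) (q : Q) : ELabel Lab → Prop
  | .lab ℓ => ℓ ∈ M.U ∧ ∃ q', M.T q (some ℓ) q'
  | .delta => M.Quiescent q

/-- `out(q)`. -/
def outq (M : LTS Q Lab) (q : Q) : Set (ELabel Lab) :=
  {x | M.outLabel q x}

/-- `in(q) = {ℓ ∈ I | q ==ℓ==>}`. -/
def inq (M : LTS Q Lab) (q : Q) : Set Lab :=
  {ℓ | ℓ ∈ M.I ∧ ∃ q', M.W q [ELabel.lab ℓ] q'}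

/-- `out(X) = ⋃_{q ∈ X} out(q)`. -/
def outSet (M : LTS Q Lab) (X : Set Q) : Set (ELabel Lab) :=
  ⋃ q ∈ X, M.outq q

/-- `in(X) = ⋂_{q ∈ X} in(q)`. -/
def inSet (M : LTS Q Lab) (X : Set Q) : Set Lab :=
  ⋂ q ∈ X, M.inq q

/-- Input-enabledness: `M` is an IOTS. -/
def InputEnabled (M : LTS Q Lab) : Prop :=
  ∀ q, ∀ ℓ ∈ M.I, ∃ q', M.W q [ELabel.lab ℓ] q'

/-- `Utraces(M)`. -/
def Utraces (M : LTS Q Lab) : Set (List (ELabel Lab)) :=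
  {σ | TraceIn M.L σ ∧ (∃ q', M.W M.q0 σ q') ∧
    ∀ σ1 ℓ σ2, σ = σ1 ++ ELabel.lab ℓ :: σ2 → ℓ ∈ M.I →
      ∀ q, M.W M.q0 σ1 q → ∃ q', M.W q [ELabel.lab ℓ] q'}

/-- An LTS is utrace-closed when every trace over `(L^δ)*` that it can
perform is a utrace. -/
def UtraceClosed (M : LTS Q Lab) : Prop :=
  ∀ σ : List (ELabel Lab), TraceIn M.L σ → (∃ q', M.W M.q0 σ q') → σ ∈ M.Utraces

end LTS

/-- `i uioco s`. -/
def Uioco {Qi Qs Lab : Type} (i : LTS Qi Lab) (s : LTS Qs Lab) : Prop :=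
  ∀ σ ∈ s.Utraces, i.outSet (i.after σ) ⊆ s.outSet (s.after σ)

/-- Composability: disjoint output label sets. -/
def Composable {Qs Qe Lab : Type} (s : LTS Qs Lab) (e : LTS Qe Lab) : Prop :=
  s.U ∩ e.U = ∅

/-- Parallel composition `s ∥ e`. -/
def par {Qs Qe Lab : Type} (s : LTS Qs Lab) (e : LTS Qe Lab) : LTS (Qs × Qe) Lab where
  I := (s.I \ e.U) ∪ (e.I \ s.U)
  U := s.U ∪ e.U
  T := fun p a p' =>
    match a with
    | none =>
        (s.T p.1 none p'.1 ∧ p'.2 = p.2) ∨ (e.T p.2 none p'.2 ∧ p'.1 = p.1)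
    | some ℓ =>
        (ℓ ∈ s.L ∧ ℓ ∉ e.L ∧ s.T p.1 (some ℓ) p'.1 ∧ p'.2 = p.2) ∨
        (ℓ ∈ e.L ∧ ℓ ∉ s.L ∧ e.T p.2 (some ℓ) p'.2 ∧ p'.1 = p.1) ∨
        (ℓ ∈ s.L ∧ ℓ ∈ e.L ∧ s.T p.1 (some ℓ) p'.1 ∧ e.T p.2 (some ℓ) p'.2)
  q0 := (s.q0, e.q0)

/-- `s accepts e`: along utraces of `s ∥ e`, every output of `e` that is an
input of `s` is (weakly) enabled in `s`. -/
def Accepts {Qs Qe Lab : Type} (s : LTS Qs Lab) (e : LTS Qe Lab) : Prop :=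
  ∀ σ ∈ (par s e).Utraces, ∀ qs qe, (par s e).W (par s e).q0 σ (qs, qe) →
    ∀ ℓ, ELabel.lab ℓ ∈ e.outq qe → ℓ ∈ s.I → ℓ ∈ s.inq qs

/-- `s mutually accepts e`. -/
def MutuallyAccepts {Qs Qe Lab : Type} (s : LTS Qs Lab) (e : LTS Qe Lab) : Prop :=
  Accepts s e ∧ Accepts e s

/-- `R` is an ecosim for `s` and `e`. -/
def IsEcosim {Qs Qe Lab : Type} (s : LTS Qs Lab) (e : LTS Qe Lab)
    (R : Set (Set Qs × Set Qe)) : Prop :=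
  (s.after [], e.after []) ∈ R ∧
  ∀ Xs Xe, (Xs, Xe) ∈ R →
    (∀ ℓ, ELabel.lab ℓ ∈ e.outSet Xe → ℓ ∈ s.I →
      ℓ ∈ s.inSet Xs ∧
        (s.afterSet Xs [ELabel.lab ℓ], e.afterSet Xe [ELabel.lab ℓ]) ∈ R) ∧
    (∀ ℓ, ELabel.lab ℓ ∈ s.outSet Xs → ℓ ∈ e.I →
      ℓ ∈ e.inSet Xe ∧
        (s.afterSet Xs [ELabel.lab ℓ], e.afterSet Xe [ELabel.lab ℓ]) ∈ R) ∧
    (∀ ℓ, (ELabel.lab ℓ ∈ e.outSet Xe ∨ ℓ ∈ e.inSet Xe) → ℓ ∉ s.L →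
      (Xs, e.afterSet Xe [ELabel.lab ℓ]) ∈ R) ∧
    (∀ ℓ, (ELabel.lab ℓ ∈ s.outSet Xs ∨ ℓ ∈ s.inSet Xs) → ℓ ∉ e.L →
      (s.afterSet Xs [ELabel.lab ℓ], Xe) ∈ R) ∧
    (∀ ℓ, ℓ ∈ s.inSet Xs → ℓ ∈ e.inSet Xe →
      (s.afterSet Xs [ELabel.lab ℓ], e.afterSet Xe [ELabel.lab ℓ]) ∈ R) ∧
    (ELabel.delta ∈ s.outSet Xs → ELabel.delta ∈ e.outSet Xe →
      (s.afterSet Xs [ELabel.delta], e.afterSet Xe [ELabel.delta]) ∈ R)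

/-- `s eco e`: there exists an ecosim for `s` and `e`. -/
def Eco {Qs Qe Lab : Type} (s : LTS Qs Lab) (e : LTS Qe Lab) : Prop :=
  ∃ R, IsEcosim s e R

/-- `R_U(s,e)`: the smallest relation closed under the given rules. -/
inductive RU {Qs Qe Lab : Type} (s : LTS Qs Lab) (e : LTS Qe Lab) :
    Set Qs → Set Qe → Prop
  | base : RU s e (s.after []) (e.after [])
  | syncOutE {Xs : Set Qs} {Xe : Set Qe} (ℓ : Lab) :
      RU s e Xs Xe → ELabel.lab ℓ ∈ e.outSet Xe → ℓ ∈ s.I →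
      RU s e (s.afterSet Xs [ELabel.lab ℓ]) (e.afterSet Xe [ELabel.lab ℓ])
  | syncOutS {Xs : Set Qs} {Xe : Set Qe} (ℓ : Lab) :
      RU s e Xs Xe → ELabel.lab ℓ ∈ s.outSet Xs → ℓ ∈ e.I →
      RU s e (s.afterSet Xs [ELabel.lab ℓ]) (e.afterSet Xe [ELabel.lab ℓ])
  | internalE {Xs : Set Qs} {Xe : Set Qe} (ℓ : Lab) :
      RU s e Xs Xe → (ELabel.lab ℓ ∈ e.outSet Xe ∨ ℓ ∈ e.inSet Xe) → ℓ ∉ s.L →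
      RU s e Xs (e.afterSet Xe [ELabel.lab ℓ])
  | internalS {Xs : Set Qs} {Xe : Set Qe} (ℓ : Lab) :
      RU s e Xs Xe → (ELabel.lab ℓ ∈ s.outSet Xs ∨ ℓ ∈ s.inSet Xs) → ℓ ∉ e.L →
      RU s e (s.afterSet Xs [ELabel.lab ℓ]) Xe
  | syncIn {Xs : Set Qs} {Xe : Set Qe} (ℓ : Lab) :
      RU s e Xs Xe → ℓ ∈ s.inSet Xs → ℓ ∈ e.inSet Xe →
      RU s e (s.afterSet Xs [ELabel.lab ℓ]) (e.afterSet Xe [ELabel.lab ℓ])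
  | qdelta {Xs : Set Qs} {Xe : Set Qe} :
      RU s e Xs Xe → ELabel.delta ∈ s.outSet Xs → ELabel.delta ∈ e.outSet Xe →
      RU s e (s.afterSet Xs [ELabel.delta]) (e.afterSet Xe [ELabel.delta])

open Classical in
/-- Projection `σ↾𝓛^δ` of a trace onto an (extended) label set: keeps `δ`
and the labels in `Ls`, removes all other labels. -/
noncomputable def projD {Lab : Type} (σ : List (ELabel Lab)) (Ls : Set Lab) :
    List (ELabel Lab) :=
  σ.filter fun x => decide (ELabel.inL Ls x)

open Classical in
/-- Projection `σ↾𝓛` of a trace of plain labels onto a label set. -/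
noncomputable def projL {Lab : Type} (σ : List Lab) (Ls : Set Lab) : List Lab :=
  σ.filter fun ℓ => decide (ℓ ∈ Ls)

open Classical in
/-- Substitution `σ[θ/δ]` of the label `θ` by the quiescence label `δ`. -/
noncomputable def substTheta {Lab : Type} (θ : Lab) (σ : List Lab) :
    List (ELabel Lab) :=
  σ.map fun ℓ => if ℓ = θ then ELabel.delta else ELabel.lab ℓ

/-- `⟨X⟩`: componentwise collection of a set of pairs of states. -/
def collect {Qs Qe : Type} (X : Set (Qs × Qe)) : Set Qs × Set Qe :=
  (Prod.fst '' X, Prod.snd '' X)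

/-- `q_s accepts q_e over σ`. -/
def AcceptsOver {Qs Qe Lab : Type} (s : LTS Qs Lab) (e : LTS Qe Lab)
    (qs : Qs) (qe : Qe) (σ : List (ELabel Lab)) : Prop :=
  ∀ σ1 σ2 : List (ELabel Lab), σ1 ++ σ2 = σ →
    ∀ (qs' : Qs) (qe' : Qe), (par s e).W (qs, qe) σ1 (qs', qe') →
      ∀ ℓ, ELabel.lab ℓ ∈ e.outq qe' → ℓ ∈ s.I → ℓ ∈ s.inq qs' ∧ ℓ ∈ e.U

/-- `q_s mutually accepts q_e over σ`. -/
def MutuallyAcceptsOver {Qs Qe Lab : Type} (s : LTS Qs Lab) (e : LTS Qe Lab)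
    (qs : Qs) (qe : Qe) (σ : List (ELabel Lab)) : Prop :=
  AcceptsOver s e qs qe σ ∧ AcceptsOver e s qe qs σ

/-- A test case: a quasi-finite tree-shaped LTS without `τ`-transitions, with
terminal states `pass` and `fail` carrying input self-loops, a special
quiescence-observation input `θ`, at most one output transition per state,
and receptive to all inputs other than `θ`. -/
structure TestCase (Qt Lab : Type) extends LTS Qt Lab where
  passS : Qt
  failS : Qt
  theta : Lab
  theta_input : theta ∈ I
  no_tau : ∀ q q', ¬ T q none q'
  tree : ∀ q, q ≠ q0 → q ≠ passS → q ≠ failS →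
    ∃! p : Qt × Option Lab, T p.1 p.2 q
  pass_loops : ∀ ℓ ∈ I, T passS (some ℓ) passS
  pass_terminal : ∀ a q', T passS a q' → q' = passS ∧ ∃ ℓ ∈ I, a = some ℓ
  fail_loops : ∀ ℓ ∈ I, T failS (some ℓ) failS
  fail_terminal : ∀ a q', T failS a q' → q' = failS ∧ ∃ ℓ ∈ I, a = some ℓ
  one_output : ∀ q ℓ ℓ' q' q'', ℓ ∈ U → ℓ' ∈ U →
    T q (some ℓ) q' → T q (some ℓ') q'' → ℓ = ℓ' ∧ q' = q''
  receptive : ∀ q, ∀ ℓ ∈ I, ℓ ≠ theta → ∃ q', T q (some ℓ) q'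

/-- Test execution `t ⫿ i` of a test case `t` with an implementation `i`. -/
def testExec {Qt Qi Lab : Type} (t : TestCase Qt Lab) (i : LTS Qi Lab) :
    LTS (Qt × Qi) Lab where
  I := ∅
  U := i.U ∪ (t.toLTS.L \ {t.theta})
  T := fun p a p' =>
    match a with
    | none => i.T p.2 none p'.2 ∧ p'.1 = p.1
    | some ℓ =>
        (ℓ ∈ i.L ∧ ℓ ∉ t.toLTS.L ∧ i.T p.2 (some ℓ) p'.2 ∧ p'.1 = p.1) ∨
        (ℓ ∈ t.toLTS.L ∧ ℓ ∉ i.L ∧ ℓ ≠ t.theta ∧ t.T p.1 (some ℓ) p'.1 ∧ p'.2 = p.2) ∨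
        (ℓ ∈ i.L ∧ ℓ ∈ t.toLTS.L ∧ t.T p.1 (some ℓ) p'.1 ∧ i.T p.2 (some ℓ) p'.2) ∨
        (ℓ = t.theta ∧ t.T p.1 (some ℓ) p'.1 ∧ p'.2 = p.2 ∧ i.Quiescent p.2)
  q0 := (t.q0, i.q0)

/-!
When `s ∥ e` performs a visible label, each component either performs it or, if the label is foreign
to it, stays put. Quiescence is the only observation that need not decompose: `p ∥ q` can be
quiescent because one component refuses an output of the other. If each side accepts the outputs of
the other this cannot happen, and the states reached by `σ` in the composition are exactly the
product of the states the components reach by the projections of `σ`.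

Input-enabledness gives this for the implementations. For the specifications, the ecosim does so by
induction along a utrace, which also shows that the projections are utraces. Hence `uioco` of the
components applies to the projections, and it remains to see that outputs of the product come from
outputs of the factors in the implementations, and conversely in the specifications.
-/

section ProjD

variable {Lab : Type} {σ : List (ELabel Lab)} {x : ELabel Lab} {Ls : Set Lab}

theorem projD_append_singleton_of_inL (hx : ELabel.inL Ls x) :
    projD (σ ++ [x]) Ls = projD σ Ls ++ [x] := by
  simp [projD, hx]

theorem projD_append_singleton_of_not_inL (hx : ¬ ELabel.inL Ls x) :
    projD (σ ++ [x]) Ls = projD σ Ls := by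
  simp [projD, hx]

end ProjD

namespace LTS

section WeakTransitions

variable {Q Lab : Type} {M : LTS Q Lab} {q q₁ q' : Q} {σ : List (ELabel Lab)} {x : ELabel Lab}
  {X : Set Q} {ℓ : Lab}

theorem w_nil_iff : M.W q [] q' ↔ M.Eps q q' := by
  refine ⟨fun h => ?_, W.nil⟩
  generalize hσ : ([] : List (ELabel Lab)) = σ at h
  cases h with
  | nil h => exact h
  | snoc => simp at hσ

theorem w_append_singleton_iff :
    M.W q (σ ++ [x]) q' ↔ ∃ q₁ q₂, M.W q σ q₁ ∧ M.VStep q₁ x q₂ ∧ M.Eps q₂ q' := by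
  refine ⟨fun h => ?_, fun ⟨_, _, hσ, hx, hε⟩ => W.snoc hσ hx hε⟩
  generalize hρ : σ ++ [x] = ρ at h
  cases h with
  | nil => simp at hρ
  | snoc hσ hx hε =>
    obtain ⟨rfl, rfl⟩ := List.append_singleton_inj.1 hρ
    exact ⟨_, _, hσ, hx, hε⟩

theorem w_singleton_iff :
    M.W q [x] q' ↔ ∃ q₁ q₂, M.Eps q q₁ ∧ M.VStep q₁ x q₂ ∧ M.Eps q₂ q' := by
  simpa only [List.nil_append, w_nil_iff] using w_append_singleton_iff (M := M) (σ := [])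

theorem W.trans_eps (h : M.W q σ q₁) (hε : M.Eps q₁ q') : M.W q σ q' := by
  cases h with
  | nil h => exact W.nil (h.trans hε)
  | snoc hσ hx h => exact W.snoc hσ hx (h.trans hε)

theorem afterSet_after_nil_subset : M.afterSet (M.after σ) [] ⊆ M.after σ :=
  fun _ ⟨_, hσ, hε⟩ => hσ.trans_eps (w_nil_iff.1 hε)

theorem after_append_singleton : M.after (σ ++ [x]) = M.afterSet (M.after σ) [x] := by
  ext q'
  refine w_append_singleton_iff.trans ⟨fun ⟨q₁, q₂, hσ, hx, hε⟩ => ?_, fun ⟨q₁, hσ, hx⟩ => ?_⟩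
  · exact ⟨q₁, hσ, w_singleton_iff.2 ⟨q₁, q₂, .refl, hx, hε⟩⟩
  · obtain ⟨q₂, q₃, hε, hx, hε'⟩ := w_singleton_iff.1 hx
    exact ⟨q₂, q₃, hσ.trans_eps hε, hx, hε'⟩

theorem mem_outSet_iff :
    x ∈ M.outSet X ↔ ELabel.inL M.U x ∧ ∃ q ∈ X, ∃ q', M.VStep q x q' := by
  cases x <;> simp [outSet, outq, outLabel, VStep, ELabel.inL]

theorem mem_inSet_iff :
    ℓ ∈ M.inSet X ↔ ∀ q ∈ X, ℓ ∈ M.I ∧ ∃ q', M.W q [.lab ℓ] q' := by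
  simp [inSet, inq]

theorem exists_vstep_of_mem_outSet_or_inSet (hclosed : M.afterSet X [] ⊆ X) (hne : X.Nonempty)
    (h : x ∈ M.outSet X ∨ x ∈ ELabel.lab '' M.inSet X) : ∃ q ∈ X, ∃ q', M.VStep q x q' := by
  rcases h with hout | ⟨ℓ, hin, rfl⟩
  · exact (mem_outSet_iff.1 hout).2
  · obtain ⟨q, hq⟩ := hne
    obtain ⟨-, q', hw⟩ := mem_inSet_iff.1 hin q hq
    obtain ⟨q₁, q₂, hε, hstep, -⟩ := w_singleton_iff.1 hw
    exact ⟨q₁, hclosed ⟨q, hq, W.nil hε⟩, q₂, hstep⟩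

end WeakTransitions

section Utraces

variable {Q Lab : Type} {M : LTS Q Lab} {σ : List (ELabel Lab)} {x : ELabel Lab} {X : Set Q}

/-- The condition under which a utrace leading to the state set `X` can be prolonged by `x`: outputs
and `δ` have to be possible in some state of `X`, inputs in all of them. It is void for labels
outside the alphabet of `M`. -/
def Allows (M : LTS Q Lab) (X : Set Q) (x : ELabel Lab) : Prop :=
  (ELabel.inL M.U x → x ∈ M.outSet X) ∧ ∀ ℓ ∈ M.I, x = .lab ℓ → ℓ ∈ M.inSet X

theorem Allows.mem_outSet_or_inSet (h : M.Allows X x) (hx : ELabel.inL M.L x) :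
    x ∈ M.outSet X ∨ x ∈ ELabel.lab '' M.inSet X := by
  cases x with
  | delta => exact .inl (h.1 trivial)
  | lab ℓ =>
    rcases hx with hI | hU
    · exact .inr ⟨ℓ, h.2 ℓ hI rfl, rfl⟩
    · exact .inl (h.1 hU)

theorem nil_mem_utraces : [] ∈ M.Utraces :=
  ⟨by simp [TraceIn], ⟨M.q0, W.nil .refl⟩, by simp⟩

theorem mem_utraces_of_append_singleton (h : σ ++ [x] ∈ M.Utraces) : σ ∈ M.Utraces := by
  obtain ⟨htrace, ⟨q', hw⟩, hinput⟩ := h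
  obtain ⟨q, -, hσ, -⟩ := w_append_singleton_iff.1 hw
  exact ⟨fun y hy => htrace y (by simp [hy]), ⟨q, hσ⟩,
    fun σ₁ ℓ σ₂ hσ => hinput σ₁ ℓ (σ₂ ++ [x]) (by simp [hσ])⟩

theorem allows_of_append_singleton_mem_utraces (h : σ ++ [x] ∈ M.Utraces) :
    M.Allows (M.after σ) x := by
  obtain ⟨-, ⟨q', hw⟩, hinput⟩ := h
  obtain ⟨q₁, q₂, hσ, hx, -⟩ := w_append_singleton_iff.1 hw
  refine ⟨fun hU => mem_outSet_iff.2 ⟨hU, q₁, hσ, q₂, hx⟩, ?_⟩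
  rintro ℓ hℓ rfl
  exact mem_inSet_iff.2 fun q hq => ⟨hℓ, hinput σ ℓ [] rfl hℓ q hq⟩

theorem append_singleton_mem_utraces (hσ : σ ∈ M.Utraces) (hx : ELabel.inL M.L x)
    (h : M.Allows (M.after σ) x) : σ ++ [x] ∈ M.Utraces := by
  obtain ⟨htrace, hne, hinput⟩ := hσ
  refine ⟨?_, ?_, fun σ₁ ℓ σ₂ heq hℓ q hq => ?_⟩
  · simpa [TraceIn, or_imp, forall_and] using ⟨htrace, hx⟩
  · obtain ⟨q, hq, q', hstep⟩ := exists_vstep_of_mem_outSet_or_inSet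
      afterSet_after_nil_subset hne (h.mem_outSet_or_inSet hx)
    exact ⟨q', W.snoc hq hstep .refl⟩
  · rcases List.eq_nil_or_concat σ₂ with rfl | ⟨ρ, y, rfl⟩
    · obtain ⟨rfl, rfl⟩ := List.append_singleton_inj.1 heq
      exact (mem_inSet_iff.1 (h.2 ℓ hℓ rfl) q hq).2
    · rw [List.concat_eq_append, ← List.cons_append, ← List.append_assoc] at heq
      exact hinput σ₁ ℓ ρ (List.append_singleton_inj.1 heq).1 hℓ q hq

end Utraces

section Projection

variable {Q Lab : Type} {M : LTS Q Lab} {q q' : Q} {σ : List (ELabel Lab)} {x : ELabel Lab}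
  {X : Set Q}

/-- The move of the component `M` when a composition performs `x`: a step labelled `x` if `x` lies
in `L^δ`, and staying put otherwise. -/
def LocalStep (M : LTS Q Lab) (q : Q) (x : ELabel Lab) (q' : Q) : Prop :=
  (ELabel.inL M.L x ∧ M.VStep q x q') ∨ (¬ ELabel.inL M.L x ∧ q' = q)

theorem LocalStep.vstep (h : M.LocalStep q x q') (hx : ELabel.inL M.L x) : M.VStep q x q' :=
  h.elim And.right fun h => absurd hx h.1

theorem inL_L_of_inL_U (hx : ELabel.inL M.U x) : ELabel.inL M.L x := by
  cases x with
  | lab => exact .inr hx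
  | delta => trivial

theorem LocalStep.mem_outSet (h : M.LocalStep q x q') (hq : q ∈ X) (hx : ELabel.inL M.U x) :
    x ∈ M.outSet X :=
  mem_outSet_iff.2 ⟨hx, q, hq, q', h.vstep (inL_L_of_inL_U hx)⟩

theorem exists_localStep (hclosed : M.afterSet X [] ⊆ X) (hne : X.Nonempty)
    (h : ELabel.inL M.L x → x ∈ M.outSet X ∨ x ∈ ELabel.lab '' M.inSet X) :
    ∃ q ∈ X, ∃ q', M.LocalStep q x q' := by
  by_cases hx : ELabel.inL M.L x
  · obtain ⟨q, hq, q', hstep⟩ := exists_vstep_of_mem_outSet_or_inSet hclosed hne (h hx)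
    exact ⟨q, hq, q', .inl ⟨hx, hstep⟩⟩
  · obtain ⟨q, hq⟩ := hne
    exact ⟨q, hq, q, .inr ⟨hx, rfl⟩⟩

theorem w_projD_append_singleton_iff :
    M.W q (projD (σ ++ [x]) M.L) q' ↔
      ∃ q₁ q₂, M.W q (projD σ M.L) q₁ ∧ M.LocalStep q₁ x q₂ ∧ M.Eps q₂ q' := by
  by_cases hx : ELabel.inL M.L x
  · simp [projD_append_singleton_of_inL hx, w_append_singleton_iff, LocalStep, hx]
  · simp only [projD_append_singleton_of_not_inL hx, LocalStep, hx, false_and, false_or,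
      not_false_eq_true, true_and]
    refine ⟨fun h => ⟨q', q', h, rfl, .refl⟩, ?_⟩
    rintro ⟨q₁, _, h, rfl, hε⟩
    exact h.trans_eps hε

theorem projD_append_singleton_mem_utraces (hσ : projD σ M.L ∈ M.Utraces)
    (h : M.Allows (M.after (projD σ M.L)) x) : projD (σ ++ [x]) M.L ∈ M.Utraces := by
  by_cases hx : ELabel.inL M.L x
  · rw [projD_append_singleton_of_inL hx]
    exact append_singleton_mem_utraces hσ hx h
  · rwa [projD_append_singleton_of_not_inL hx]

end Projection

section Parallel

variable {Qa Qb Lab : Type} {a : LTS Qa Lab} {b : LTS Qb Lab} {p p' : Qa} {q q' : Qb}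
  {ℓ : Lab} {x : ELabel Lab} {X : Set Qa} {Y : Set Qb}

theorem L_par : (par a b).L = a.L ∪ b.L := by
  ext ℓ
  simp only [L, par, Set.mem_union, Set.mem_sdiff]
  tauto

theorem t_par_swap {α : Option Lab} :
    (par a b).T (p, q) α (p', q') ↔ (par b a).T (q, p) α (q', p') := by
  cases α <;> simp only [par] <;> tauto

theorem t_par_iff :
    (par a b).T (p, q) (some ℓ) (p', q') ↔
      ℓ ∈ a.L ∪ b.L ∧ a.LocalStep p (.lab ℓ) p' ∧ b.LocalStep q (.lab ℓ) q' := by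
  simp only [par, LocalStep, ELabel.inL, VStep, Set.mem_union]
  tauto

theorem eps_par_iff : (par a b).Eps (p, q) (p', q') ↔ a.Eps p p' ∧ b.Eps q q' := by
  constructor
  · suffices ∀ r r', (par a b).Eps r r' → a.Eps r.1 r'.1 ∧ b.Eps r.2 r'.2 from this (p, q) (p', q')
    intro r r' h
    induction h with
    | refl => exact ⟨.refl, .refl⟩
    | tail _ hτ ih =>
      rcases hτ with ⟨hτ, heq⟩ | ⟨hτ, heq⟩
      · exact ⟨ih.1.tail hτ, heq ▸ ih.2⟩
      · exact ⟨heq ▸ ih.1, ih.2.tail hτ⟩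
  · rintro ⟨hp, hq⟩
    have hleft : (par a b).Eps (p, q) (p', q) :=
      Relation.ReflTransGen.lift (·, q) (fun _ _ hτ => Or.inl ⟨hτ, rfl⟩) _ _ hp
    have hright : (par a b).Eps (p', q) (p', q') :=
      Relation.ReflTransGen.lift (p', ·) (fun _ _ hτ => Or.inr ⟨hτ, rfl⟩) _ _ hq
    exact hleft.trans hright

theorem after_par_nil : (par a b).after [] = a.after [] ×ˢ b.after [] := by
  ext ⟨p, q⟩
  simp only [after, Set.mem_prod, Set.mem_ofPred_eq, w_nil_iff]
  exact eps_par_iff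

theorem w_lab_of_par (h : (par a b).W (p, q) [.lab ℓ] (p', q')) :
    (ℓ ∈ a.L → a.W p [.lab ℓ] p') ∧ (ℓ ∈ b.L → b.W q [.lab ℓ] q') := by
  obtain ⟨⟨p₁, q₁⟩, ⟨p₂, q₂⟩, hε, hstep, hε'⟩ := w_singleton_iff.1 h
  obtain ⟨hεp, hεq⟩ := eps_par_iff.1 hε
  obtain ⟨hεp', hεq'⟩ := eps_par_iff.1 hε'
  obtain ⟨-, hp, hq⟩ := t_par_iff.1 hstep
  exact ⟨fun ha => w_singleton_iff.2 ⟨p₁, p₂, hεp, hp.vstep ha, hεp'⟩,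
    fun hb => w_singleton_iff.2 ⟨q₁, q₂, hεq, hq.vstep hb, hεq'⟩⟩

theorem mem_inSet_left_of_par (hY : Y.Nonempty) (h : ℓ ∈ (par a b).inSet (X ×ˢ Y))
    (hℓ : ℓ ∈ a.I) : ℓ ∈ a.inSet X := by
  obtain ⟨q, hq⟩ := hY
  refine mem_inSet_iff.2 fun p hp => ⟨hℓ, ?_⟩
  obtain ⟨-, ⟨p', q'⟩, hw⟩ := mem_inSet_iff.1 h (p, q) ⟨hp, hq⟩
  exact ⟨p', (w_lab_of_par hw).1 (.inl hℓ)⟩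

theorem mem_inSet_right_of_par (hX : X.Nonempty) (h : ℓ ∈ (par a b).inSet (X ×ˢ Y))
    (hℓ : ℓ ∈ b.I) : ℓ ∈ b.inSet Y := by
  obtain ⟨p, hp⟩ := hX
  refine mem_inSet_iff.2 fun q hq => ⟨hℓ, ?_⟩
  obtain ⟨-, ⟨p', q'⟩, hw⟩ := mem_inSet_iff.1 h (p, q) ⟨hp, hq⟩
  exact ⟨q', (w_lab_of_par hw).2 (.inl hℓ)⟩

theorem Quiescent.par (hp : a.Quiescent p) (hq : b.Quiescent q) :
    (par a b).Quiescent (p, q) := by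
  constructor
  · rintro ℓ (ha | hb) ⟨p', q'⟩ hstep
    · exact hp.1 ℓ ha p' ((t_par_iff.1 hstep).2.1.vstep (.inr ha))
    · exact hq.1 ℓ hb q' ((t_par_iff.1 hstep).2.2.vstep (.inr hb))
  · rintro ⟨p', q'⟩ (⟨hτ, -⟩ | ⟨hτ, -⟩)
    · exact hp.2 p' hτ
    · exact hq.2 q' hτ

theorem LocalStep.par (hp : a.LocalStep p x p') (hq : b.LocalStep q x q')
    (hx : ELabel.inL (a.L ∪ b.L) x) : (par a b).VStep (p, q) x (p', q') := by
  cases x with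
  | lab ℓ => exact t_par_iff.2 ⟨hx, hp, hq⟩
  | delta =>
    obtain ⟨rfl, hp⟩ := hp.vstep trivial
    obtain ⟨rfl, hq⟩ := hq.vstep trivial
    exact ⟨rfl, hp.par hq⟩

end Parallel

section MutualAcceptance

variable {Qa Qb Lab : Type} {a : LTS Qa Lab} {b : LTS Qb Lab} {p p' : Qa} {q q' : Qb}
  {x : ELabel Lab} {σ : List (ELabel Lab)} {X : Set Qa} {Y : Set Qb}

/-- `Accepts` for sets of states: all states in `X` accept every output of `b` from a state in `Y`
that is an input of `a`. -/
def AcceptsOn (a : LTS Qa Lab) (b : LTS Qb Lab) (X : Set Qa) (Y : Set Qb) : Prop :=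
  ∀ ℓ ∈ a.I, .lab ℓ ∈ b.outSet Y → ℓ ∈ a.inSet X

/-- `MutuallyAccepts` for sets of states: the outputs that either side can produce are accepted by
the other side. -/
def MutuallyAcceptsOn (a : LTS Qa Lab) (b : LTS Qb Lab) (X : Set Qa) (Y : Set Qb) : Prop :=
  AcceptsOn a b X Y ∧ AcceptsOn b a Y X

theorem InputEnabled.acceptsOn (ha : a.InputEnabled) : AcceptsOn a b X Y :=
  fun ℓ hℓ _ => mem_inSet_iff.2 fun p _ => ⟨hℓ, ha p ℓ hℓ⟩

-- Quiescence makes `q` stable, so it takes part in an output of `p` without prior `τ`-steps.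
theorem quiescent_left_of_par (hab : Composable a b) (hacc : AcceptsOn b a Y X) (hp : p ∈ X)
    (hq : q ∈ Y) (h : (par a b).Quiescent (p, q)) : a.Quiescent p := by
  refine ⟨fun ℓ hℓ p' hstep => ?_, fun p' hτ => h.2 (p', q) (.inl ⟨hτ, rfl⟩)⟩
  have hstable : b.afterSet {q} [] ⊆ {q} := by
    rintro q' ⟨_, rfl, hε⟩
    rcases (w_nil_iff.1 hε).cases_head with rfl | ⟨q₁, hτ, -⟩
    · rfl
    · exact absurd (.inr ⟨hτ, rfl⟩) (h.2 (p, q₁))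
  have henabled (hb : ℓ ∈ b.L) : ℓ ∈ b.inSet {q} := by
    have hI : ℓ ∈ b.I :=
      hb.resolve_right (Set.disjoint_left.1 (Set.disjoint_iff_inter_eq_empty.2 hab) hℓ)
    have hY := hacc ℓ hI (mem_outSet_iff.2 ⟨hℓ, p, hp, p', hstep⟩)
    exact mem_inSet_iff.2 fun _ hq' => mem_inSet_iff.1 hY _ (hq' ▸ hq)
  obtain ⟨_, rfl, q', hlocal⟩ := exists_localStep (x := .lab ℓ) hstable ⟨q, rfl⟩
    fun hb => .inr ⟨ℓ, henabled hb, rfl⟩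
  exact h.1 ℓ (.inl hℓ) (p', q') (t_par_iff.2 ⟨.inl (.inr hℓ), .inl ⟨.inr hℓ, hstep⟩, hlocal⟩)

theorem quiescent_par_swap (h : (par a b).Quiescent (p, q)) : (par b a).Quiescent (q, p) :=
  ⟨fun ℓ hℓ ⟨q', p'⟩ hstep => h.1 ℓ hℓ.symm (p', q') (t_par_swap.1 hstep),
    fun ⟨q', p'⟩ hτ => h.2 (p', q') (t_par_swap.1 hτ)⟩

theorem vstep_par_iff (hab : Composable a b) (hacc : MutuallyAcceptsOn a b X Y) (hp : p ∈ X)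
    (hq : q ∈ Y) (hx : ELabel.inL (a.L ∪ b.L) x) :
    (par a b).VStep (p, q) x (p', q') ↔ a.LocalStep p x p' ∧ b.LocalStep q x q' := by
  refine ⟨fun h => ?_, fun h => h.1.par h.2 hx⟩
  cases x with
  | lab ℓ => exact (t_par_iff.1 h).2
  | delta =>
    obtain ⟨heq, hquiescent⟩ := h
    obtain ⟨rfl, rfl⟩ := Prod.mk.inj heq
    have hba : Composable b a := (Set.inter_comm _ _).trans hab
    exact ⟨.inl ⟨trivial, rfl, quiescent_left_of_par hab hacc.2 hp hq hquiescent⟩,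
      .inl ⟨trivial, rfl, quiescent_left_of_par hba hacc.1 hq hp (quiescent_par_swap hquiescent)⟩⟩

theorem after_par_append_singleton (hab : Composable a b)
    (hσ : (par a b).after σ = a.after (projD σ a.L) ×ˢ b.after (projD σ b.L))
    (hacc : MutuallyAcceptsOn a b (a.after (projD σ a.L)) (b.after (projD σ b.L)))
    (hx : ELabel.inL (a.L ∪ b.L) x) :
    (par a b).after (σ ++ [x]) =
      a.after (projD (σ ++ [x]) a.L) ×ˢ b.after (projD (σ ++ [x]) b.L) := by
  ext ⟨p, q⟩
  have hmem (p₁ q₁) : (par a b).W (par a b).q0 σ (p₁, q₁) ↔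
      a.W a.q0 (projD σ a.L) p₁ ∧ b.W b.q0 (projD σ b.L) q₁ := Set.ext_iff.1 hσ (p₁, q₁)
  simp only [after, Set.mem_prod, Set.mem_ofPred_eq, w_append_singleton_iff,
    w_projD_append_singleton_iff]
  constructor
  · rintro ⟨⟨p₁, q₁⟩, ⟨p₂, q₂⟩, hw, hstep, hε⟩
    obtain ⟨hp, hq⟩ := (hmem _ _).1 hw
    obtain ⟨hpx, hqx⟩ := (vstep_par_iff hab hacc hp hq hx).1 hstep
    obtain ⟨hεp, hεq⟩ := eps_par_iff.1 hε
    exact ⟨⟨p₁, p₂, hp, hpx, hεp⟩, ⟨q₁, q₂, hq, hqx, hεq⟩⟩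
  · rintro ⟨⟨p₁, p₂, hp, hpx, hεp⟩, ⟨q₁, q₂, hq, hqx, hεq⟩⟩
    exact ⟨(p₁, q₁), (p₂, q₂), (hmem _ _).2 ⟨hp, hq⟩, hpx.par hqx hx, eps_par_iff.2 ⟨hεp, hεq⟩⟩

theorem after_par_of_inputEnabled (hab : Composable a b) (ha : a.InputEnabled)
    (hb : b.InputEnabled) (hσ : TraceIn (a.L ∪ b.L) σ) :
    (par a b).after σ = a.after (projD σ a.L) ×ˢ b.after (projD σ b.L) := by
  induction σ using List.reverseRecOn with
  | nil => exact after_par_nil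
  | append_singleton σ x ih =>
    exact after_par_append_singleton hab (ih fun y hy => hσ y (by simp [hy]))
      ⟨ha.acceptsOn, hb.acceptsOn⟩ (hσ x (by simp))

theorem mem_outSet_of_mem_outSet_par (hab : Composable a b) (hacc : MutuallyAcceptsOn a b X Y)
    (h : x ∈ (par a b).outSet (X ×ˢ Y)) :
    (ELabel.inL a.U x → x ∈ a.outSet X) ∧ (ELabel.inL b.U x → x ∈ b.outSet Y) := by
  obtain ⟨hx, ⟨p, q⟩, ⟨hp, hq⟩, ⟨p', q'⟩, hstep⟩ := mem_outSet_iff.1 h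
  obtain ⟨hpx, hqx⟩ := (vstep_par_iff hab hacc hp hq (L_par ▸ inL_L_of_inL_U hx)).1 hstep
  exact ⟨hpx.mem_outSet hp, hqx.mem_outSet hq⟩

theorem AcceptsOn.mem_outSet_or_inSet (hacc : AcceptsOn a b X Y)
    (hx : ELabel.inL (a.U ∪ b.U) x) (ha : ELabel.inL a.U x → x ∈ a.outSet X)
    (hb : ELabel.inL b.U x → x ∈ b.outSet Y) (hL : ELabel.inL a.L x) :
    x ∈ a.outSet X ∨ x ∈ ELabel.lab '' a.inSet X := by
  by_cases hU : ELabel.inL a.U x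
  · exact .inl (ha hU)
  cases x with
  | delta => exact absurd trivial hU
  | lab ℓ => exact .inr ⟨ℓ, hacc ℓ (hL.resolve_right hU) (hb (hx.resolve_left hU)), rfl⟩

theorem mem_outSet_par (hacc : MutuallyAcceptsOn a b X Y) (hX : X.Nonempty) (hY : Y.Nonempty)
    (hXclosed : a.afterSet X [] ⊆ X) (hYclosed : b.afterSet Y [] ⊆ Y)
    (hx : ELabel.inL (a.U ∪ b.U) x) (ha : ELabel.inL a.U x → x ∈ a.outSet X)
    (hb : ELabel.inL b.U x → x ∈ b.outSet Y) : x ∈ (par a b).outSet (X ×ˢ Y) := by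
  obtain ⟨p, hp, p', hpx⟩ := exists_localStep hXclosed hX (hacc.1.mem_outSet_or_inSet hx ha hb)
  obtain ⟨q, hq, q', hqx⟩ := exists_localStep hYclosed hY
    (hacc.2.mem_outSet_or_inSet (Set.union_comm a.U b.U ▸ hx) hb ha)
  have hL : ELabel.inL (a.L ∪ b.L) x := L_par ▸ inL_L_of_inL_U (M := par a b) hx
  exact mem_outSet_iff.2 ⟨hx, (p, q), ⟨hp, hq⟩, (p', q'), hpx.par hqx hL⟩

theorem Allows.of_par (hab : Composable a b) (hacc : MutuallyAcceptsOn a b X Y)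
    (hX : X.Nonempty) (hY : Y.Nonempty) (h : (par a b).Allows (X ×ˢ Y) x) :
    a.Allows X x ∧ b.Allows Y x := by
  have houtA (hx : ELabel.inL a.U x) : x ∈ a.outSet X :=
    (mem_outSet_of_mem_outSet_par hab hacc (h.1 (by cases x; exacts [.inl hx, trivial]))).1 hx
  have houtB (hx : ELabel.inL b.U x) : x ∈ b.outSet Y :=
    (mem_outSet_of_mem_outSet_par hab hacc (h.1 (by cases x; exacts [.inr hx, trivial]))).2 hx
  refine ⟨⟨houtA, ?_⟩, ⟨houtB, ?_⟩⟩
  · rintro ℓ hℓ rfl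
    by_cases hU : ℓ ∈ b.U
    · exact hacc.1 ℓ hℓ (houtB hU)
    · exact mem_inSet_left_of_par hY (h.2 ℓ (.inl ⟨hℓ, hU⟩) rfl) hℓ
  · rintro ℓ hℓ rfl
    by_cases hU : ℓ ∈ a.U
    · exact hacc.2 ℓ hℓ (houtA hU)
    · exact mem_inSet_right_of_par hX (h.2 ℓ (.inr ⟨hℓ, hU⟩) rfl) hℓ

end MutualAcceptance

end LTS

namespace IsEcosim

open LTS

variable {Qs Qe Lab : Type} {s : LTS Qs Lab} {e : LTS Qe Lab} {R : Set (Set Qs × Set Qe)}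
  {σ : List (ELabel Lab)} {x : ELabel Lab}

theorem mutuallyAcceptsOn (hR : IsEcosim s e R) {X : Set Qs} {Y : Set Qe} (h : (X, Y) ∈ R) :
    MutuallyAcceptsOn s e X Y :=
  ⟨fun ℓ hℓ hout => ((hR.2 X Y h).1 ℓ hout hℓ).1, fun ℓ hℓ hout => ((hR.2 X Y h).2.1 ℓ hout hℓ).1⟩

theorem after_projD_append_singleton_mem (hR : IsEcosim s e R) (hse : Composable s e)
    (h : (s.after (projD σ s.L), e.after (projD σ e.L)) ∈ R)
    (hx : ELabel.inL (s.L ∪ e.L) x) (hs : s.Allows (s.after (projD σ s.L)) x)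
    (he : e.Allows (e.after (projD σ e.L)) x) :
    (s.after (projD (σ ++ [x]) s.L), e.after (projD (σ ++ [x]) e.L)) ∈ R := by
  obtain ⟨houtE, houtS, hforeignE, hforeignS, hinput, hdelta⟩ := hR.2 _ _ h
  cases x with
  | delta =>
    have hδ (Ls : Set Lab) : projD (σ ++ [.delta]) Ls = projD σ Ls ++ [.delta] :=
      projD_append_singleton_of_inL trivial
    rw [hδ, hδ, after_append_singleton, after_append_singleton]
    exact hdelta (hs.1 trivial) (he.1 trivial)
  | lab ℓ =>
    by_cases hℓs : ELabel.inL s.L (.lab ℓ) <;> by_cases hℓe : ELabel.inL e.L (.lab ℓ)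
    · rw [projD_append_singleton_of_inL hℓs, projD_append_singleton_of_inL hℓe,
        after_append_singleton, after_append_singleton]
      rcases hℓs with hsI | hsU <;> rcases hℓe with heI | heU
      · exact hinput ℓ (hs.2 ℓ hsI rfl) (he.2 ℓ heI rfl)
      · exact (houtE ℓ (he.1 heU) hsI).2
      · exact (houtS ℓ (hs.1 hsU) heI).2
      · exact absurd heU (Set.disjoint_left.1 (Set.disjoint_iff_inter_eq_empty.2 hse) hsU)
    · rw [projD_append_singleton_of_inL hℓs, projD_append_singleton_of_not_inL hℓe,
        after_append_singleton]
      exact hforeignS ℓ ((hℓs.imp (hs.2 ℓ · rfl) hs.1).symm) hℓe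
    · rw [projD_append_singleton_of_not_inL hℓs, projD_append_singleton_of_inL hℓe,
        after_append_singleton]
      exact hforeignE ℓ ((hℓe.imp (he.2 ℓ · rfl) he.1).symm) hℓs
    · exact (hx.elim hℓs hℓe).elim

theorem projD_of_mem_utraces_par (hR : IsEcosim s e R) (hse : Composable s e)
    (hσ : σ ∈ (par s e).Utraces) :
    (s.after (projD σ s.L), e.after (projD σ e.L)) ∈ R ∧
      projD σ s.L ∈ s.Utraces ∧ projD σ e.L ∈ e.Utraces ∧
      (par s e).after σ = s.after (projD σ s.L) ×ˢ e.after (projD σ e.L) := by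
  induction σ using List.reverseRecOn with
  | nil => exact ⟨hR.1, nil_mem_utraces, nil_mem_utraces, after_par_nil⟩
  | append_singleton σ x ih =>
    obtain ⟨hmem, hs, he, hafter⟩ := ih (mem_utraces_of_append_singleton hσ)
    have hacc := hR.mutuallyAcceptsOn hmem
    have hx : ELabel.inL (s.L ∪ e.L) x := L_par ▸ hσ.1 x (by simp)
    have hallows := allows_of_append_singleton_mem_utraces hσ
    rw [hafter] at hallows
    obtain ⟨hsx, hex⟩ := hallows.of_par hse hacc hs.2.1 he.2.1
    exact ⟨hR.after_projD_append_singleton_mem hse hmem hx hsx hex,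
      projD_append_singleton_mem_utraces hs hsx, projD_append_singleton_mem_utraces he hex,
      after_par_append_singleton hse hafter hacc hx⟩

end IsEcosim

theorem compositional_testing_eco_general
    {Qs Qe Qis Qie Lab : Type}
    {s : LTS Qs Lab} {e : LTS Qe Lab} {iS : LTS Qis Lab} {iE : LTS Qie Lab}
    (hcomp : Composable s e)
    (hiSenabled : iS.InputEnabled) (hiEenabled : iE.InputEnabled)
    (hI1 : iS.I = s.I) (hU1 : iS.U = s.U)
    (hI2 : iE.I = e.I) (hU2 : iE.U = e.U)
    (heco : Eco s e)
    (huioco1 : Uioco iS s) (huioco2 : Uioco iE e) :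
    Uioco (par iS iE) (par s e) := by
  obtain ⟨R, hR⟩ := heco
  intro σ hσ x hx
  have hL1 : iS.L = s.L := by rw [LTS.L, LTS.L, hI1, hU1]
  have hL2 : iE.L = e.L := by rw [LTS.L, LTS.L, hI2, hU2]
  have hcomp' : Composable iS iE := by rwa [Composable, hU1, hU2]
  have htrace : TraceIn (iS.L ∪ iE.L) σ := by rw [hL1, hL2, ← LTS.L_par]; exact hσ.1
  obtain ⟨hmem, hs, he, hafter⟩ := hR.projD_of_mem_utraces_par hcomp hσ
  have hxU : ELabel.inL (s.U ∪ e.U) x := hU1 ▸ hU2 ▸ (LTS.mem_outSet_iff.1 hx).1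
  rw [LTS.after_par_of_inputEnabled hcomp' hiSenabled hiEenabled htrace] at hx
  obtain ⟨hxs, hxe⟩ := LTS.mem_outSet_of_mem_outSet_par hcomp'
    ⟨hiSenabled.acceptsOn, hiEenabled.acceptsOn⟩ hx
  rw [hL1, hU1] at hxs
  rw [hL2, hU2] at hxe
  rw [hafter]
  exact LTS.mem_outSet_par (hR.mutuallyAcceptsOn hmem) hs.2.1 he.2.1
    LTS.afterSet_after_nil_subset LTS.afterSet_after_nil_subset hxU
    (huioco1 _ hs <| hxs ·) (huioco2 _ he <| hxe ·)

/-- if `s eco e`, `i_s uioco s` and `i_e uioco e`,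
then `i_s ∥ i_e uioco s ∥ e`. -/
theorem compositional_testing_eco
    {Qs Qe Qis Qie Lab : Type}
    (s : LTS Qs Lab) (e : LTS Qe Lab) (iS : LTS Qis Lab) (iE : LTS Qie Lab)
    (hs : s.WellFormed) (he : e.WellFormed)
    (hiS : iS.WellFormed) (hiE : iE.WellFormed)
    (hcomp : Composable s e)
    (hiSenabled : iS.InputEnabled) (hiEenabled : iE.InputEnabled)
    (hI1 : iS.I = s.I) (hU1 : iS.U = s.U)
    (hI2 : iE.I = e.I) (hU2 : iE.U = e.U)
    (heco : Eco s e)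
    (huioco1 : Uioco iS s) (huioco2 : Uioco iE e) :
    Uioco (par iS iE) (par s e) :=
  compositional_testing_eco_general hcomp hiSenabled hiEenabled hI1 hU1 hI2 hU2 heco huioco1 huioco2
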